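/- Let p be an integer with 2 ≤ p ≤ m, let λ* be a real number with λ_p < λ* < Λ, and let μ, ν be real numbers with μ/ν < 0. Let F(λ) = ∏_{i=1}^{p}(λ − α_i) and G(λ) = ∏_{i=1}^{p−1}(λ − β_i) be real polynomials whose roots satisfy α_p ∈ [λ_p, λ*) and, for each i = 1,…,p−1: λ_i ≤ α_i, α_i + C_1^n·ρ_i < β_i, β_i < λ_i + (1 + C_2(i))^n·ρ_i, and λ_i + (1 + C_2(i))^n·ρ_i < λ_{i+1}. Then there exist monic real polynomials F_0 and G_0, F_0 having p distinct real roots α'_1 < ⋯ < α'_p and G_0 having p−1 distinct real roots β'_1 < ⋯ < β'_{p−1}, such that α'_p = λ* and for each i = 1,…,p−1: α'_i ∈ (α_i, β_i) and C_1·(β_i − α_i) ≤ β'_i − α'_i ≤ C_2(i)·(β_i − α_i); moreover there exist real numbers m* > 0, b* > 0 and μ_0, ν_0 with −μ_0/ν_0 > −(λ_1/Λ)·(μ/ν) such that the identities μ·F(λ) = −m*·ν·λ·G(λ) − b*·μ_0·F_0(λ) and ν·(λ − λ*)·G(λ) = μ_0·F_0(λ) + b*·ν_0·(λ* − λ)·G_0(λ)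 hold in ℝ[λ]. -/

import Mathlib

open Polynomial

/-- `Δ = (1/2)·min{1, min_{1≤i≤m−1}(λ_{i+1} − λ_i)}`. -/
noncomputable def Del (m : ℕ) (lam : ℕ → ℝ) : ℝ :=
  (1 / 2) * min 1 (sInf ((fun i => lam (i + 1) - lam i) '' Set.Icc 1 (m - 1)))

/-- `Λ = 1 + λ_m`. -/
noncomputable def Lamb (m : ℕ) (lam : ℕ → ℝ) : ℝ := 1 + lam m

/-- `ε = Δ^{n²+n+1}/(n·2^{3(n+1)³}·Λ^{(n+1)²})`. -/
noncomputable def eps (n m : ℕ) (lam : ℕ → ℝ) : ℝ :=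
  Del m lam ^ (n ^ 2 + n + 1) /
    ((n : ℝ) * 2 ^ (3 * (n + 1) ^ 3) * Lamb m lam ^ ((n + 1) ^ 2))

/-- `ρ_i = ε^{(n+1)^{m−i}}`. -/
noncomputable def rho (n m : ℕ) (lam : ℕ → ℝ) (i : ℕ) : ℝ :=
  eps n m lam ^ ((n + 1) ^ (m - i))

/-- `C_1 = Δ/(2^{n+1}Λ)`. -/
noncomputable def Cone (n m : ℕ) (lam : ℕ → ℝ) : ℝ :=
  Del m lam / (2 ^ (n + 1) * Lamb m lam)

/-- `C_2(j) = 2^{2(n+1)²}·Λ^{n+1}/(Δ^n·ε^{(n+1)^{m−j−1}})`. -/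
noncomputable def Ctwo (n m : ℕ) (lam : ℕ → ℝ) (j : ℕ) : ℝ :=
  2 ^ (2 * (n + 1) ^ 2) * Lamb m lam ^ (n + 1) /
    (Del m lam ^ n * eps n m lam ^ ((n + 1) ^ (m - j - 1)))

/-- `C = 2^{2n+1}(1 + Λ^n)/(C_1^{2n²}·ρ_1^{2n})`. -/
noncomputable def CC (n m : ℕ) (lam : ℕ → ℝ) : ℝ :=
  2 ^ (2 * n + 1) * (1 + Lamb m lam ^ n) /
    (Cone n m lam ^ (2 * n ^ 2) * rho n m lam 1 ^ (2 * n))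

/-!
Both identities, after normalisation, write a monic polynomial as a convex combination of monic
polynomials: `F = τ λ G + (1 - τ) F₀` and `G = σ H + (1 - σ) G₀`, where `F₀ = (λ - λ*) H`.
The weight `τ` is forced by the requirement that `F - τ λ G` vanish at `λ*`. At `α i` and at `β i`
this polynomial is, up to positive factors, `-G` and `F`; interlacing makes these two values of
opposite signs, so it has a root `α' i` in between. For small `σ` the polynomial `G - σ H` changes
sign between `β i` and a point just to its right, which locates `β' i`.

The hypotheses on the roots enter only through the gap `Δ` between consecutive pairs `(α i, β i)`
and the smallness `Λ ∑ (β i - α i) ≤ Δ ^ 2`. The latter makes `G / ∏ (λ - α i)` so close to `1`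
at `λ*` that `τ < 1 - λ 1 / Λ`, which is the bound on `-μ₀ / ν₀`. Comparing the two sides of
`F = τ λ G` at `α' i` factor by factor keeps `α' i` away from `β i`.
-/

section NodalPolynomials

open Finset Lagrange Set

variable {ι : Type*} {s : Finset ι}

theorem coeff_card_nodal {R : Type*} [CommRing R] [Nontrivial R] (v : ι → R) :
    (nodal s v).coeff #s = 1 := by
  simpa only [natDegree_nodal] using (nodal_monic (s := s) (v := v)).coeff_natDegree

theorem eq_C_mul_nodal {R : Type*} [CommRing R] [IsDomain R] {Q : R[X]} {r : ι → R}
    (hr : InjOn r s) (hdeg : Q.natDegree ≤ #s) (hroot : ∀ i ∈ s, Q.eval (r i) = 0) :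
    Q = C (Q.coeff #s) * nodal s r := by
  refine eq_of_degree_sub_lt_of_eval_index_eq s hr ?_ fun i hi => ?_
  · refine (degree_lt_iff_coeff_zero _ _).2 fun k hk => ?_
    rcases hk.eq_or_lt with rfl | hk
    · simp [coeff_card_nodal]
    · simp [coeff_eq_zero_of_natDegree_lt (hdeg.trans_lt hk),
        coeff_eq_zero_of_natDegree_lt (natDegree_nodal.trans_lt hk)]
  · rw [hroot i hi, eval_mul, eval_nodal_at_node hi, mul_zero]

theorem coeff_X_sub_C_mul_succ {R : Type*} [CommRing R] {P : R[X]} {z : R} {k : ℕ}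
    (hP : P.natDegree ≤ k) : ((X - C z) * P).coeff (k + 1) = P.coeff k := by
  rw [sub_mul, coeff_sub, coeff_X_mul, coeff_C_mul,
    coeff_eq_zero_of_natDegree_lt (Nat.lt_succ_of_le hP), mul_zero, sub_zero]

theorem exists_eq_X_sub_C_mul_of_isRoot {R : Type*} [CommRing R] [Nontrivial R] {Q : R[X]} {z : R}
    {k : ℕ} (hdeg : Q.natDegree ≤ k + 1) (hz : Q.IsRoot z) :
    ∃ P : R[X], Q = (X - C z) * P ∧ P.natDegree ≤ k ∧ P.coeff k = Q.coeff (k + 1) := by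
  have hQ : Q = (X - C z) * (Q /ₘ (X - C z)) := (mul_divByMonic_eq_iff_isRoot.2 hz).symm
  have hP : (Q /ₘ (X - C z)).natDegree ≤ k := by
    rw [natDegree_divByMonic _ (monic_X_sub_C z), natDegree_X_sub_C]
    exact Nat.sub_le_of_le_add hdeg
  exact ⟨_, hQ, hP, by rw [← coeff_X_sub_C_mul_succ (z := z) hP, ← hQ]⟩

theorem exists_mem_Ioo_eval_eq_zero {Q : ℝ[X]} {u v : ℝ} (huv : u < v)
    (hsign : Q.eval u * Q.eval v < 0) : ∃ x ∈ Ioo u v, Q.eval x = 0 := by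
  rcases mul_neg_iff.1 hsign with ⟨hu, hv⟩ | ⟨hu, hv⟩
  · exact intermediate_value_Ioo' huv.le Q.continuousOn ⟨hv, hu⟩
  · exact intermediate_value_Ioo huv.le Q.continuousOn ⟨hu, hv⟩

theorem exists_eq_C_mul_nodal_of_sign_changes {Q : ℝ[X]} {u v : ι → ℝ}
    (hdeg : Q.natDegree ≤ #s) (huv : ∀ i ∈ s, u i < v i)
    (hdisj : (s : Set ι).PairwiseDisjoint fun i => Ioo (u i) (v i))
    (hsign : ∀ i ∈ s, Q.eval (u i) * Q.eval (v i) < 0) :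
    ∃ r : ι → ℝ, (∀ i ∈ s, r i ∈ Ioo (u i) (v i)) ∧ Q = C (Q.coeff #s) * nodal s r := by
  choose! r hmem hroot using fun i hi => exists_mem_Ioo_eval_eq_zero (huv i hi) (hsign i hi)
  refine ⟨r, hmem, eq_C_mul_nodal (fun i hi j hj hij => ?_) hdeg hroot⟩
  exact hdisj.elim_set hi hj (r i) (hmem i hi) (hij ▸ hmem j hj)

theorem abs_eval_nodal_le {a b : ι → ℝ} {c x : ℝ} (h : ∀ j ∈ s, |x - b j| ≤ c * |x - a j|) :
    |(nodal s b).eval x| ≤ c ^ #s * |(nodal s a).eval x| := by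
  simp only [eval_nodal, abs_prod]
  calc ∏ j ∈ s, |x - b j| ≤ ∏ j ∈ s, c * |x - a j| :=
        prod_le_prod (fun j _ => abs_nonneg _) h
    _ = c ^ #s * ∏ j ∈ s, |x - a j| := by rw [prod_mul_distrib, prod_const]

theorem one_sub_sum_le_prod_one_sub {y : ι → ℝ} (h0 : ∀ j ∈ s, 0 ≤ y j)
    (h1 : ∀ j ∈ s, y j ≤ 1) : 1 - ∑ j ∈ s, y j ≤ ∏ j ∈ s, (1 - y j) := by
  classical
  induction s using Finset.induction_on with
  | empty => simp
  | insert i s hi ih =>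
    rw [sum_insert hi, prod_insert hi]
    simp only [Finset.forall_mem_insert] at h0 h1
    nlinarith [ih h0.2 h1.2, mul_nonneg h0.1 (sum_nonneg h0.2)]

theorem one_sub_sum_div_mul_eval_nodal_le {a b : ι → ℝ} {x : ℝ} (hab : ∀ j ∈ s, a j ≤ b j)
    (hbx : ∀ j ∈ s, b j < x) :
    (1 - ∑ j ∈ s, (b j - a j) / (x - a j)) * (nodal s a).eval x ≤ (nodal s b).eval x := by
  have hax (j) (hj : j ∈ s) : 0 < x - a j := by linarith [hab j hj, hbx j hj]
  have hfactor (j) (hj : j ∈ s) : (1 - (b j - a j) / (x - a j)) * (x - a j) = x - b j := by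
    rw [one_sub_mul, div_mul_cancel₀ _ (hax j hj).ne']; ring
  simp only [eval_nodal]
  rw [← prod_congr rfl hfactor, prod_mul_distrib]
  refine mul_le_mul_of_nonneg_right (one_sub_sum_le_prod_one_sub (fun j hj => ?_) fun j hj => ?_)
    (prod_nonneg fun j hj => (hax j hj).le)
  · exact div_nonneg (sub_nonneg.2 (hab j hj)) (hax j hj).le
  · exact (div_le_one (hax j hj)).2 (by linarith [hbx j hj])

end NodalPolynomials

section Interlacing

open Finset Lagrange Set

variable {ι : Type*} [LinearOrder ι] {s : Finset ι} {a b c : ι → ℝ}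

/-- Strict interlacing `a₁ < b₁ < a₂ < b₂ < ⋯` of two families of reals indexed by a finite
linearly ordered set. -/
structure Interlacing (s : Finset ι) (a b : ι → ℝ) : Prop where
  lt : ∀ i ∈ s, a i < b i
  lt_of_lt : ∀ i ∈ s, ∀ j ∈ s, i < j → b i < a j

namespace Interlacing

theorem pairwiseDisjoint_Ioo (h : Interlacing s a b) :
    (s : Set ι).PairwiseDisjoint fun i => Ioo (a i) (b i) := by
  intro i hi j hj hij
  refine Set.disjoint_left.2 fun x hx hx' => ?_
  rcases hij.lt_or_gt with hlt | hlt
  · linarith [h.lt_of_lt i hi j hj hlt, hx.2, hx'.1]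
  · linarith [h.lt_of_lt j hj i hi hlt, hx.1, hx'.2]

theorem strictMonoOn_left (h : Interlacing s a b) : StrictMonoOn a s :=
  fun i hi j hj hij => (h.lt i hi).trans (h.lt_of_lt i hi j hj hij)

theorem strictMonoOn_right (h : Interlacing s a b) : StrictMonoOn b s :=
  fun i hi j hj hij => (h.lt_of_lt i hi j hj hij).trans (h.lt j hj)

theorem eval_nodal_mul_eval_nodal_neg (h : Interlacing s a b) {i : ι} (hi : i ∈ s) :
    (nodal s b).eval (a i) * (nodal s a).eval (b i) < 0 := by
  rw [eval_nodal, eval_nodal, ← prod_mul_distrib, ← mul_prod_erase _ _ hi]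
  have hi' := h.lt i hi
  refine mul_neg_of_neg_of_pos (by nlinarith) (prod_pos fun j hj => ?_)
  obtain ⟨hne, hj⟩ := mem_erase.1 hj
  have hj' := h.lt j hj
  rcases hne.lt_or_gt with hlt | hlt
  · have := h.lt_of_lt j hj i hi hlt
    exact mul_pos (by linarith) (by linarith)
  · have := h.lt_of_lt i hi j hj hlt
    exact mul_pos_of_neg_of_neg (by linarith) (by linarith)

theorem eval_nodal_mul_eval_nodal_pos (hab : Interlacing s a b) (hbc : Interlacing s b c)
    {i : ι} (hi : i ∈ s) : 0 < (nodal s a).eval (b i) * (nodal s b).eval (c i) := by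
  rw [eval_nodal, eval_nodal, ← prod_mul_distrib]
  refine prod_pos fun j hj => ?_
  have hij := hbc.lt i hi
  rcases lt_trichotomy j i with hlt | rfl | hlt
  · have := hab.lt_of_lt j hj i hi hlt
    exact mul_pos (by linarith [hab.lt i hi, hab.lt j hj]) (by linarith [hab.lt i hi])
  · exact mul_pos (sub_pos.2 (hab.lt j hj)) (sub_pos.2 hij)
  · exact mul_pos_of_neg_of_neg (sub_neg.2 (hab.lt_of_lt i hi j hj hlt))
      (sub_neg.2 (hbc.lt_of_lt i hi j hj hlt))

theorem exists_nodal_eq_convex_combination (hab : Interlacing s a b) (hbc : Interlacing s b c) :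
    ∃ σ ∈ Ioo (0 : ℝ) 1, ∃ r : ι → ℝ, (∀ i ∈ s, r i ∈ Ioo (b i) (c i)) ∧
      nodal s b = C σ * nodal s a + C (1 - σ) * nodal s r := by
  have hsmall : ∀ᶠ σ in nhds (0 : ℝ), ∀ i ∈ s,
      0 < (nodal s a).eval (b i) * ((nodal s b).eval (c i) - σ * (nodal s a).eval (c i)) := by
    refine (Finset.eventually_all s).2 fun i hi => ?_
    have hcont : Continuous fun σ : ℝ =>
      (nodal s a).eval (b i) * ((nodal s b).eval (c i) - σ * (nodal s a).eval (c i)) := by fun_prop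
    refine continuousAt_const.eventually_lt hcont.continuousAt ?_
    simpa using hab.eval_nodal_mul_eval_nodal_pos hbc hi
  obtain ⟨σ, hσ, hσ01⟩ := ((hsmall.filter_mono nhdsWithin_le_nhds).and
    (Ioo_mem_nhdsGT one_pos)).exists
  have hdeg : (nodal s b - C σ * nodal s a).natDegree ≤ #s :=
    (natDegree_sub_le _ _).trans
      (max_le natDegree_nodal.le ((natDegree_C_mul_le _ _).trans natDegree_nodal.le))
  have hsign (i) (hi : i ∈ s) : (nodal s b - C σ * nodal s a).eval (b i) *
      (nodal s b - C σ * nodal s a).eval (c i) < 0 := by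
    simp only [eval_sub, eval_mul, eval_C, eval_nodal_at_node hi]
    linarith [mul_pos hσ01.1 (hσ i hi)]
  obtain ⟨r, hr, hfactor⟩ :=
    exists_eq_C_mul_nodal_of_sign_changes hdeg hbc.lt hbc.pairwiseDisjoint_Ioo hsign
  refine ⟨σ, hσ01, r, hr, ?_⟩
  rw [coeff_sub, coeff_C_mul, coeff_card_nodal, coeff_card_nodal, mul_one] at hfactor
  linear_combination hfactor

theorem exists_convex_combination_root_eq (h : Interlacing s a b) {t L τ : ℝ} (hτ : 0 < τ)
    (ha : ∀ i ∈ s, 0 < a i) (hbt : ∀ i ∈ s, b i < t) (htL : t ≤ L)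
    (hL : (L - t) * (nodal s a).eval L = τ * (L * (nodal s b).eval L)) :
    ∃ r : ι → ℝ, (∀ i ∈ s, r i ∈ Ioo (a i) (b i)) ∧
      (X - C t) * nodal s a =
        C τ * (X * nodal s b) + C (1 - τ) * ((X - C L) * nodal s r) := by
  set Q : ℝ[X] := (X - C t) * nodal s a - C τ * (X * nodal s b) with hQ
  have hdeg : Q.natDegree ≤ #s + 1 := by
    refine (natDegree_sub_le _ _).trans (max_le ?_ ((natDegree_C_mul_le _ _).trans ?_))
    · exact natDegree_mul_le.trans (by rw [natDegree_X_sub_C, natDegree_nodal, add_comm])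
    · exact natDegree_mul_le.trans (by rw [natDegree_X, natDegree_nodal, add_comm])
  have hcoeff : Q.coeff (#s + 1) = 1 - τ := by
    rw [hQ, coeff_sub, coeff_X_sub_C_mul_succ natDegree_nodal.le, coeff_C_mul, coeff_X_mul,
      coeff_card_nodal, coeff_card_nodal, mul_one]
  have hroot : Q.IsRoot L := by simp [hQ, hL]
  obtain ⟨R, hQR, hRdeg, hRcoeff⟩ := exists_eq_X_sub_C_mul_of_isRoot hdeg hroot
  have hsign (i) (hi : i ∈ s) : R.eval (a i) * R.eval (b i) < 0 := by
    have hQa : (a i - L) * R.eval (a i) = -(τ * (a i * (nodal s b).eval (a i))) := by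
      simpa [hQ, eval_nodal_at_node hi] using (congrArg (eval (a i)) hQR).symm
    have hQb : (b i - L) * R.eval (b i) = (b i - t) * (nodal s a).eval (b i) := by
      simpa [hQ, eval_nodal_at_node hi] using (congrArg (eval (b i)) hQR).symm
    have hbi := hbt i hi
    have hpos : 0 < (a i - L) * (b i - L) :=
      mul_pos_of_neg_of_neg (by linarith [h.lt i hi]) (by linarith)
    have hneg : τ * a i * (t - b i) * ((nodal s b).eval (a i) * (nodal s a).eval (b i)) < 0 :=
      mul_neg_of_pos_of_neg (mul_pos (mul_pos hτ (ha i hi)) (sub_pos.2 hbi))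
        (h.eval_nodal_mul_eval_nodal_neg hi)
    refine neg_of_mul_neg_right (lt_of_eq_of_lt ?_ hneg) hpos.le
    linear_combination (b i - L) * R.eval (b i) * hQa -
      τ * (a i * (nodal s b).eval (a i)) * hQb
  obtain ⟨r, hr, hfactor⟩ :=
    exists_eq_C_mul_nodal_of_sign_changes hRdeg h.lt h.pairwiseDisjoint_Ioo hsign
  refine ⟨r, hr, ?_⟩
  rw [hRcoeff, hcoeff] at hfactor
  linear_combination hQR + (X - C L) * hfactor

theorem abs_eval_nodal_erase_bounds (h : Interlacing s a b) {x δ : ℝ} (hδ : 0 < δ)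
    (hgap : ∀ i ∈ s, ∀ j ∈ s, i < j → b i + δ ≤ a j) (hlen : ∀ i ∈ s, b i - a i ≤ δ)
    {i : ι} (hi : i ∈ s) (hx : x ∈ Ioo (a i) (b i)) :
    0 < |(nodal (s.erase i) a).eval x| ∧
      |(nodal (s.erase i) b).eval x| ≤ 2 ^ #(s.erase i) * |(nodal (s.erase i) a).eval x| := by
  have hfar (j) (hj : j ∈ s.erase i) : δ ≤ |x - a j| := by
    obtain ⟨hne, hj⟩ := mem_erase.1 hj
    rcases hne.lt_or_gt with hlt | hlt
    · exact le_abs.2 (.inl (by linarith [hgap j hj i hi hlt, h.lt j hj, hx.1]))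
    · exact le_abs.2 (.inr (by linarith [hgap i hi j hj hlt, hx.2]))
  constructor
  · refine abs_pos.2 (eval_nodal_not_at_node fun j hj hxa => ?_)
    simpa [hxa, hδ.not_ge] using hfar j hj
  · refine abs_eval_nodal_le fun j hj => ?_
    have hj' := mem_of_mem_erase hj
    calc |x - b j| ≤ |x - a j| + |a j - b j| := abs_sub_le _ _ _
      _ = |x - a j| + (b j - a j) := by
        rw [abs_sub_comm (a j), abs_of_pos (sub_pos.2 (h.lt j hj'))]
      _ ≤ 2 * |x - a j| := by linarith [hfar j hj, hlen j hj']

theorem mul_sub_le_two_pow_card_mul_sub (h : Interlacing s a b) {t τ x δ Λ : ℝ} (hδ : 0 < δ)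
    (hδΛ : δ ≤ Λ) (hgap : ∀ i ∈ s, ∀ j ∈ s, i < j → b i + δ ≤ a j)
    (hlen : ∀ i ∈ s, b i - a i ≤ δ) {i : ι} (hi : i ∈ s) (hbt : b i + δ ≤ t)
    (hx : x ∈ Ioo (a i) (b i)) (hx0 : 0 ≤ x) (hxΛ : x ≤ Λ) (hτ : τ ∈ Set.Icc 0 1)
    (hroot : (x - t) * (nodal s a).eval x = τ * (x * (nodal s b).eval x)) :
    δ * (b i - a i) ≤ 2 ^ #s * Λ * (b i - x) := by
  obtain ⟨hA, hBA⟩ := h.abs_eval_nodal_erase_bounds hδ hgap hlen hi hx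
  set A := |(nodal (s.erase i) a).eval x|
  set B := |(nodal (s.erase i) b).eval x|
  have hax : 0 < x - a i := sub_pos.2 hx.1
  have hxb : 0 < b i - x := sub_pos.2 hx.2
  have hdist : δ ≤ t - x := by linarith
  have habs : (t - x) * (x - a i) * A = τ * x * (b i - x) * B := by
    rw [nodal_eq_mul_nodal_erase hi, nodal_eq_mul_nodal_erase hi] at hroot
    simpa [abs_mul, abs_of_pos hax, abs_sub_comm x, abs_of_pos hxb, abs_of_nonneg hx0,
      abs_of_nonneg hτ.1, abs_of_pos (hδ.trans_le hdist), mul_assoc] using congrArg abs hroot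
  have hleft : δ * (x - a i) ≤ 2 ^ #(s.erase i) * Λ * (b i - x) := by
    refine le_of_mul_le_mul_right ?_ hA
    calc δ * (x - a i) * A ≤ (t - x) * (x - a i) * A := by gcongr
      _ = τ * x * (b i - x) * B := habs
      _ ≤ 1 * Λ * (b i - x) * (2 ^ #(s.erase i) * A) := by
        have hτ1 := hτ.2
        have hΛ : 0 ≤ Λ := hδ.le.trans hδΛ
        gcongr
      _ = 2 ^ #(s.erase i) * Λ * (b i - x) * A := by ring
  have hright : δ * (b i - x) ≤ 2 ^ #(s.erase i) * Λ * (b i - x) := by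
    have : Λ ≤ 2 ^ #(s.erase i) * Λ :=
      le_mul_of_one_le_left (hδ.le.trans hδΛ) (one_le_pow₀ one_le_two)
    gcongr
    exact hδΛ.trans this
  rw [← card_erase_add_one hi, pow_succ]
  linarith

theorem sub_mul_eval_nodal_lt (h : Interlacing s a b) {t L δ ℓ Λ : ℝ} (hδ : 0 < δ) (hℓ : 0 ≤ ℓ)
    (hbt : ∀ j ∈ s, b j + δ ≤ t) (hsum : Λ * ∑ j ∈ s, (b j - a j) ≤ δ ^ 2) (hℓt : ℓ + δ ≤ t)
    (htL : t < L) (hLΛ : L < Λ) :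
    (L - t) * (nodal s a).eval L < (1 - ℓ / Λ) * (L * (nodal s b).eval L) := by
  have hL0 : 0 < L := by linarith
  have hΛ : 0 < Λ := hL0.trans hLΛ
  have hbL (j) (hj : j ∈ s) : b j < L := by linarith [hbt j hj]
  have hA : 0 < (nodal s a).eval L := by
    rw [eval_nodal]
    exact prod_pos fun j hj => by linarith [h.lt j hj, hbL j hj]
  have hsum_div : ∑ j ∈ s, (b j - a j) / (L - a j) ≤ δ / Λ := by
    calc ∑ j ∈ s, (b j - a j) / (L - a j) ≤ ∑ j ∈ s, (b j - a j) / δ := by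
          refine sum_le_sum fun j hj => ?_
          have := h.lt j hj
          exact div_le_div_of_nonneg_left (by linarith) hδ (by linarith [hbt j hj])
      _ = (∑ j ∈ s, (b j - a j)) / δ := (sum_div _ _ _).symm
      _ ≤ δ / Λ := by rw [div_le_div_iff₀ hδ hΛ]; linarith
  have hAB : (1 - δ / Λ) * (nodal s a).eval L ≤ (nodal s b).eval L :=
    (mul_le_mul_of_nonneg_right (by linarith) hA.le).trans
      (one_sub_sum_div_mul_eval_nodal_le (fun j hj => (h.lt j hj).le) hbL)
  have hLt : L - t < L * ((1 - ℓ / Λ) * (1 - δ / Λ)) := by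
    have hexp : L * ((1 - ℓ / Λ) * (1 - δ / Λ)) =
        L - (ℓ + δ) * (L / Λ) + L * (ℓ * δ) / Λ ^ 2 := by
      field_simp; ring
    have hLdiv : (ℓ + δ) * (L / Λ) < ℓ + δ :=
      mul_lt_of_lt_one_right (by linarith) ((div_lt_one hΛ).2 hLΛ)
    have hrest : 0 ≤ L * (ℓ * δ) / Λ ^ 2 := by positivity
    linarith
  have hℓΛ : 0 ≤ 1 - ℓ / Λ := sub_nonneg.2 ((div_le_one hΛ).2 (by linarith))
  calc (L - t) * (nodal s a).eval L
      < L * ((1 - ℓ / Λ) * (1 - δ / Λ)) * (nodal s a).eval L := by gcongr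
    _ = (1 - ℓ / Λ) * (L * ((1 - δ / Λ) * (nodal s a).eval L)) := by ring
    _ ≤ (1 - ℓ / Λ) * (L * (nodal s b).eval L) := by gcongr

theorem sub_le_of_mul_sum_le (h : Interlacing s a b) {δ Λ : ℝ} (hδ : 0 < δ) (hδΛ : δ ≤ Λ)
    (hsum : Λ * ∑ i ∈ s, (b i - a i) ≤ δ ^ 2) {i : ι} (hi : i ∈ s) : b i - a i ≤ δ := by
  have hterm : b i - a i ≤ ∑ i ∈ s, (b i - a i) :=
    single_le_sum (f := fun i => b i - a i) (fun j hj => (sub_pos.2 (h.lt j hj)).le) hi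
  have hsum0 := (sub_pos.2 (h.lt i hi)).le.trans hterm
  exact hterm.trans (le_of_mul_le_mul_left (by nlinarith) hδ)

theorem exists_convex_combination_with_root (h : Interlacing s a b) {t L δ ℓ Λ : ℝ} (hδ : 0 < δ)
    (hℓ : 0 < ℓ) (hℓa : ∀ i ∈ s, ℓ ≤ a i) (hgap : ∀ i ∈ s, ∀ j ∈ s, i < j → b i + δ ≤ a j)
    (hbt : ∀ i ∈ s, b i + δ ≤ t) (hsum : Λ * ∑ i ∈ s, (b i - a i) ≤ δ ^ 2) (hℓt : ℓ + δ ≤ t)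
    (htL : t < L) (hLΛ : L < Λ) :
    ∃ τ ∈ Ioo 0 (1 - ℓ / Λ), ∃ r : ι → ℝ,
      (∀ i ∈ s, r i ∈ Ioo (a i) (b i) ∧ δ / (2 ^ #s * Λ) * (b i - a i) ≤ b i - r i) ∧
      (X - C t) * nodal s a =
        C τ * (X * nodal s b) + C (1 - τ) * ((X - C L) * nodal s r) := by
  have hδΛ : δ ≤ Λ := by linarith
  have hΛ : 0 < Λ := hδ.trans_le hδΛ
  have hA : 0 < (L - t) * (nodal s a).eval L := by
    rw [eval_nodal]
    exact mul_pos (sub_pos.2 htL) (prod_pos fun i hi => by linarith [h.lt i hi, hbt i hi])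
  have hB : 0 < L * (nodal s b).eval L := by
    rw [eval_nodal]
    exact mul_pos (by linarith) (prod_pos fun i hi => by linarith [hbt i hi])
  set τ := (L - t) * (nodal s a).eval L / (L * (nodal s b).eval L)
  have hτ0 : 0 < τ := div_pos hA hB
  have hτℓ : τ < 1 - ℓ / Λ :=
    (div_lt_iff₀ hB).2 (h.sub_mul_eval_nodal_lt hδ hℓ.le hbt hsum hℓt htL hLΛ)
  have hτ1 : τ ≤ 1 := by linarith [div_pos hℓ hΛ]
  obtain ⟨r, hr, hcomb⟩ := h.exists_convex_combination_root_eq hτ0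
    (fun i hi => hℓ.trans_le (hℓa i hi)) (fun i hi => by linarith [hbt i hi]) htL.le
    (div_mul_cancel₀ _ hB.ne').symm
  refine ⟨τ, ⟨hτ0, hτℓ⟩, r, fun i hi => ⟨hr i hi, ?_⟩, hcomb⟩
  have hroot : (r i - t) * (nodal s a).eval (r i) = τ * (r i * (nodal s b).eval (r i)) := by
    simpa [eval_nodal_at_node hi] using congrArg (eval (r i)) hcomb
  rw [div_mul_eq_mul_div, div_le_iff₀' (by positivity)]
  exact h.mul_sub_le_two_pow_card_mul_sub hδ hδΛ hgap
    (fun j => h.sub_le_of_mul_sum_le hδ hδΛ hsum) hi (hbt i hi) (hr i hi)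
    (by linarith [hℓa i hi, (hr i hi).1]) (by linarith [hbt i hi, (hr i hi).2]) ⟨hτ0.le, hτ1⟩ hroot

theorem exists_convex_combinations (h : Interlacing s a b) {t L δ ℓ Λ : ℝ} (hδ : 0 < δ)
    (hℓ : 0 < ℓ) (hℓa : ∀ i ∈ s, ℓ ≤ a i) (hgap : ∀ i ∈ s, ∀ j ∈ s, i < j → b i + δ ≤ a j)
    (hbt : ∀ i ∈ s, b i + δ ≤ t) (hsum : Λ * ∑ i ∈ s, (b i - a i) ≤ δ ^ 2) (hℓt : ℓ + δ ≤ t)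
    (htL : t < L) (hLΛ : L < Λ) :
    ∃ τ ∈ Ioo 0 (1 - ℓ / Λ), ∃ σ ∈ Ioo (0 : ℝ) 1, ∃ a' b' : ι → ℝ,
      Interlacing s a' b ∧ Interlacing s b b' ∧
      (∀ i ∈ s, a i < a' i ∧ δ / (2 ^ #s * Λ) * (b i - a i) ≤ b' i - a' i ∧
        b' i - a' i ≤ b i - a i) ∧
      (X - C t) * nodal s a =
        C τ * (X * nodal s b) + C (1 - τ) * ((X - C L) * nodal s a') ∧
      nodal s b = C σ * nodal s a' + C (1 - σ) * nodal s b' := by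
  obtain ⟨τ, hτ, a', ha', hA⟩ :=
    h.exists_convex_combination_with_root hδ hℓ hℓa hgap hbt hsum hℓt htL hLΛ
  have hab' : Interlacing s a' b :=
    ⟨fun i hi => (ha' i hi).1.2,
      fun i hi j hj hij => (h.lt_of_lt i hi j hj hij).trans (ha' j hj).1.1⟩
  have hbc : Interlacing s b fun i => b i + (a' i - a i) := by
    refine ⟨fun i hi => by linarith [(ha' i hi).1.1], fun i hi j hj hij => ?_⟩
    have hlen := h.sub_le_of_mul_sum_le hδ (by linarith) hsum hi
    linarith [hgap i hi j hj hij, h.lt j hj, (ha' i hi).1.2]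
  obtain ⟨σ, hσ, b', hb', hB⟩ := hab'.exists_nodal_eq_convex_combination hbc
  have hbb' : Interlacing s b b' :=
    ⟨fun i hi => (hb' i hi).1,
      fun i hi j hj hij => (hb' i hi).2.trans (hbc.lt_of_lt i hi j hj hij)⟩
  refine ⟨τ, hτ, σ, hσ, a', b', hab', hbb', fun i hi => ?_, hA, hB⟩
  obtain ⟨⟨haa', -⟩, hlen⟩ := ha' i hi
  exact ⟨haa', by linarith [(hb' i hi).1], by linarith [(hb' i hi).2]⟩

end Interlacing

end Interlacing

section Decomposition

open Finset Lagrange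

theorem add_le_of_lt_of_gap {a b : ℕ → ℝ} {δ : ℝ} {q : ℕ} (hδ : 0 ≤ δ)
    (hab : ∀ i ∈ Icc 1 q, a i < b i) (hba : ∀ i ∈ Icc 1 q, b i + δ ≤ a (i + 1)) {i j : ℕ}
    (hi : 1 ≤ i) (hij : i < j) (hj : j ≤ q + 1) : b i + δ ≤ a j := by
  induction j, hij using Nat.le_induction with
  | base => exact hba i (mem_Icc.2 ⟨hi, by lia⟩)
  | succ j hij ih =>
    have hj' : j ∈ Icc 1 q := mem_Icc.2 ⟨by lia, by lia⟩
    linarith [ih (by lia), hab j hj', hba j hj']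

theorem exists_coefficients_of_convex_combinations {F G H G₀ : ℝ[X]} {L τ σ κ μ ν : ℝ}
    (hτ : τ ∈ Set.Ioo 0 (1 - κ)) (hκ : 0 ≤ κ) (hσ : σ ∈ Set.Ioo 0 1) (hμν : μ / ν < 0)
    (hF : F = C τ * (X * G) + C (1 - τ) * ((X - C L) * H)) (hG : G = C σ * H + C (1 - σ) * G₀) :
    ∃ m b μ₀ ν₀ : ℝ, 0 < m ∧ 0 < b ∧ -μ₀ / ν₀ > -κ * (μ / ν) ∧
      C μ * F = -(C m * C ν) * X * G - C b * C μ₀ * ((X - C L) * H) ∧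
      C ν * (X - C L) * G = C μ₀ * ((X - C L) * H) + C b * C ν₀ * (C L - X) * G₀ := by
  obtain ⟨hτ0, hτ1⟩ := hτ
  obtain ⟨hσ0, hσ1⟩ := hσ
  have hν : ν ≠ 0 := by rintro rfl; simp at hμν
  obtain ⟨ω, rfl⟩ : ∃ ω, μ = -ω * ν := ⟨-(μ / ν), by field_simp⟩
  have hω : 0 < ω := by rwa [mul_div_cancel_right₀ _ hν, neg_lt_zero] at hμν
  have hτ' : 0 < 1 - τ := by linarith
  have hσ' : 0 < 1 - σ := sub_pos.2 hσ1
  refine ⟨ω * τ, ω * (1 - τ) / σ, ν * σ, -(ν * (1 - σ) * σ) / (ω * (1 - τ)),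
    by positivity, by positivity, ?_, ?_, ?_⟩
  · have hratio : -(ν * σ) / (-(ν * (1 - σ) * σ) / (ω * (1 - τ))) = ω * (1 - τ) / (1 - σ) := by
      field_simp
    rw [hratio, mul_div_cancel_right₀ _ hν, neg_mul_neg, gt_iff_lt, lt_div_iff₀ hσ']
    calc κ * ω * (1 - σ) < (1 - τ) * ω * (1 - σ) := by gcongr; linarith
      _ < ω * (1 - τ) := by
        rw [mul_comm (1 - τ)]
        exact mul_lt_of_lt_one_right (by positivity) (by linarith)
  · have hb : ω * (1 - τ) / σ * (ν * σ) = ω * (1 - τ) * ν := by field_simp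
    rw [hF, ← C_mul (a := ω * (1 - τ) / σ), hb]
    simp only [C_mul, C_neg, C_sub, C_1]
    ring
  · have hb : ω * (1 - τ) / σ * (-(ν * (1 - σ) * σ) / (ω * (1 - τ))) = -(ν * (1 - σ)) := by
      field_simp
    rw [hG, ← C_mul (a := ω * (1 - τ) / σ), hb]
    simp only [C_mul, C_neg, C_sub, C_1]
    ring

theorem update_lt_update_succ {r : ℕ → ℝ} {q : ℕ} {x : ℝ} (hr : StrictMonoOn r (Icc 1 q))
    (hrx : ∀ i ∈ Icc 1 q, r i < x) {i : ℕ} (hi : i ∈ Icc 1 q) :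
    Function.update r (q + 1) x i < Function.update r (q + 1) x (i + 1) := by
  have hiq : i ≤ q := (mem_Icc.1 hi).2
  rw [Function.update_of_ne (by lia)]
  rcases hiq.eq_or_lt with rfl | hiq
  · rw [Function.update_self]
    exact hrx i hi
  · rw [Function.update_of_ne (by lia)]
    exact hr (mem_coe.2 hi) (mem_coe.2 (mem_Icc.2 ⟨by lia, hiq⟩)) i.lt_succ_self

theorem prod_X_sub_C_update_succ {R : Type*} [CommRing R] (r : ℕ → R) (q : ℕ) (x : R) :
    ∏ i ∈ Icc 1 (q + 1), (X - C (Function.update r (q + 1) x i)) =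
      (X - C x) * nodal (Icc 1 q) r := by
  rw [prod_Icc_succ_top (by lia), Function.update_self, mul_comm, nodal]
  refine congrArg _ (prod_congr rfl fun i hi => ?_)
  rw [Function.update_of_ne (Nat.lt_succ_of_le (mem_Icc.1 hi).2).ne]

theorem exists_decomposition_of_separated_roots {q : ℕ} (hq : 1 ≤ q) {δ ℓ Λ L μ ν : ℝ}
    {α β : ℕ → ℝ} (hδ : 0 < δ) (hℓ : 0 < ℓ) (hℓα : ℓ ≤ α 1)
    (hαβ : ∀ i ∈ Icc 1 q, α i < β i) (hβα : ∀ i ∈ Icc 1 q, β i + δ ≤ α (i + 1))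
    (hsum : Λ * ∑ i ∈ Icc 1 q, (β i - α i) ≤ δ ^ 2) (hαL : α (q + 1) < L) (hLΛ : L < Λ)
    (hμν : μ / ν < 0) :
    ∃ (α' β' : ℕ → ℝ) (m b μ₀ ν₀ : ℝ),
      (∀ i, 1 ≤ i → i < q + 1 → α' i < α' (i + 1)) ∧
      (∀ i, 1 ≤ i → i < q → β' i < β' (i + 1)) ∧
      α' (q + 1) = L ∧
      (∀ i ∈ Icc 1 q, α' i ∈ Set.Ioo (α i) (β i) ∧
        δ / (2 ^ q * Λ) * (β i - α i) ≤ β' i - α' i ∧ β' i - α' i ≤ β i - α i) ∧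
      0 < m ∧ 0 < b ∧ -μ₀ / ν₀ > -(ℓ / Λ) * (μ / ν) ∧
      C μ * ∏ i ∈ Icc 1 (q + 1), (X - C (α i)) =
        -(C m * C ν) * X * ∏ i ∈ Icc 1 q, (X - C (β i)) -
          C b * C μ₀ * ∏ i ∈ Icc 1 (q + 1), (X - C (α' i)) ∧
      C ν * (X - C L) * ∏ i ∈ Icc 1 q, (X - C (β i)) =
        C μ₀ * ∏ i ∈ Icc 1 (q + 1), (X - C (α' i)) +
          C b * C ν₀ * (C L - X) * ∏ i ∈ Icc 1 q, (X - C (β' i)) := by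
  have hgap {i j : ℕ} (hi : i ∈ Icc 1 q) (hij : i < j) (hj : j ≤ q + 1) : β i + δ ≤ α j :=
    add_le_of_lt_of_gap hδ.le hαβ hβα (mem_Icc.1 hi).1 hij hj
  have hle {j : ℕ} (hj : j ∈ Icc 1 q) : j ≤ q := (mem_Icc.1 hj).2
  have h1 : 1 ∈ Icc 1 q := left_mem_Icc.2 hq
  have hℓt : ℓ + δ ≤ α (q + 1) := by linarith [hαβ 1 h1, hgap h1 (by lia : 1 < q + 1) le_rfl]
  have hℓα' (i) (hi : i ∈ Icc 1 q) : ℓ ≤ α i := by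
    rcases (mem_Icc.1 hi).1.eq_or_lt with rfl | hi1
    · exact hℓα
    · linarith [hαβ 1 h1, hgap h1 hi1 (hle hi).step]
  have hinter : Interlacing (Icc 1 q) α β :=
    ⟨hαβ, fun i hi j hj hij => by linarith [hgap hi hij (hle hj).step]⟩
  obtain ⟨τ, hτ, σ, hσ, r, β', hrβ, hββ', hbounds, hF, hG⟩ :=
    hinter.exists_convex_combinations hδ hℓ hℓα' (fun i hi j hj hij => hgap hi hij (hle hj).step)
      (fun i hi => hgap hi (Nat.lt_succ_of_le (hle hi)) le_rfl) hsum hℓt hαL hLΛ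
  have hΛ : 0 < Λ := by linarith
  obtain ⟨m, b, μ₀, ν₀, hm, hb, hratio, hμF, hνG⟩ :=
    exists_coefficients_of_convex_combinations hτ (by positivity) hσ hμν hF hG
  have hupdate {i : ℕ} (hi : i ∈ Icc 1 q) : Function.update r (q + 1) L i = r i :=
    Function.update_of_ne (Nat.lt_succ_of_le (hle hi)).ne _ _
  have hprod := prod_X_sub_C_update_succ r q L
  refine ⟨Function.update r (q + 1) L, β', m, b, μ₀, ν₀, fun i h1i hiq => ?_, fun i h1i hiq => ?_,
    Function.update_self .., fun i hi => ?_, hm, hb, hratio, ?_, ?_⟩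
  · refine update_lt_update_succ hrβ.strictMonoOn_left (fun j hj => ?_)
      (mem_Icc.2 ⟨h1i, Nat.le_of_lt_succ hiq⟩)
    linarith [hrβ.lt j hj, hgap hj (Nat.lt_succ_of_le (hle hj)) le_rfl]
  · exact hββ'.strictMonoOn_right (mem_coe.2 (mem_Icc.2 ⟨h1i, hiq.le⟩))
      (mem_coe.2 (mem_Icc.2 ⟨by lia, hiq⟩)) i.lt_succ_self
  · rw [hupdate hi]
    obtain ⟨hαr, hlower, hupper⟩ := hbounds i hi
    rw [Nat.card_Icc, Nat.add_sub_cancel] at hlower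
    exact ⟨⟨hαr, hrβ.lt i hi⟩, hlower, hupper⟩
  · rwa [hprod, prod_Icc_succ_top (by lia), mul_comm (∏ i ∈ Icc 1 q, _)]
  · rwa [hprod]

end Decomposition

section Constants

variable {n m : ℕ} {lam : ℕ → ℝ}

theorem Del_pos (hm : 2 ≤ m) (hmono : ∀ i, 1 ≤ i → i < m → lam i < lam (i + 1)) :
    0 < Del m lam := by
  have hne : ((fun i => lam (i + 1) - lam i) '' Set.Icc 1 (m - 1)).Nonempty :=
    (Set.nonempty_Icc.2 (by lia)).image _
  obtain ⟨i, hi, hmin⟩ := hne.csInf_mem ((Set.finite_Icc 1 (m - 1)).image _)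
  rw [Del, ← hmin]
  have him : i < m := Nat.lt_of_le_pred (by lia) hi.2
  exact mul_pos one_half_pos (lt_min one_pos (sub_pos.2 (hmono i hi.1 him)))

theorem Del_le_one : Del m lam ≤ 1 := by
  have h := min_le_left 1 (sInf ((fun i => lam (i + 1) - lam i) '' Set.Icc 1 (m - 1)))
  rw [Del]
  linarith

theorem add_two_mul_Del_le {i : ℕ} (hi : 1 ≤ i) (him : i < m) :
    lam i + 2 * Del m lam ≤ lam (i + 1) := by
  have hinf : sInf ((fun i => lam (i + 1) - lam i) '' Set.Icc 1 (m - 1)) ≤ lam (i + 1) - lam i :=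
    csInf_le ((Set.finite_Icc 1 (m - 1)).image _).bddBelow ⟨i, ⟨hi, by lia⟩, rfl⟩
  rw [Del]
  linarith [(min_le_right 1 _).trans hinf]

theorem first_le (hmono : ∀ i, 1 ≤ i → i < m → lam i < lam (i + 1)) {i : ℕ} (hi : 1 ≤ i)
    (him : i ≤ m) : lam 1 ≤ lam i := by
  induction i, hi using Nat.le_induction with
  | base => exact le_rfl
  | succ i hi ih => exact (ih (by lia)).trans (hmono i hi (by lia)).le

theorem eps_pos (hn : 0 < n) (hΔ : 0 < Del m lam) (hΛ : 0 < Lamb m lam) : 0 < eps n m lam := by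
  rw [eps]
  positivity

theorem eps_le_one (hn : 0 < n) (hΔ : 0 ≤ Del m lam) (hΛ : 1 ≤ Lamb m lam) :
    eps n m lam ≤ 1 := by
  refine div_le_one_of_le₀ ((pow_le_one₀ hΔ Del_le_one).trans ?_) (by positivity)
  have hn' : (1 : ℝ) ≤ n := by exact_mod_cast hn
  exact one_le_mul_of_one_le_of_one_le
    (one_le_mul_of_one_le_of_one_le hn' (one_le_pow₀ one_le_two)) (one_le_pow₀ hΛ)

theorem rho_pos (hn : 0 < n) (hΔ : 0 < Del m lam) (hΛ : 0 < Lamb m lam) (i : ℕ) :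
    0 < rho n m lam i :=
  pow_pos (eps_pos hn hΔ hΛ) _

theorem Cone_pos (hΔ : 0 < Del m lam) (hΛ : 0 < Lamb m lam) : 0 < Cone n m lam := by
  rw [Cone]
  positivity

theorem Cone_le {q : ℕ} (hΔ : 0 ≤ Del m lam) (hΛ : 0 < Lamb m lam) (hq : q ≤ n + 1) :
    Cone n m lam ≤ Del m lam / (2 ^ q * Lamb m lam) := by
  rw [Cone]
  gcongr
  exact one_le_two

theorem one_le_Ctwo (hn : 0 < n) (hΔ : 0 < Del m lam) (hΛ : 1 ≤ Lamb m lam) (i : ℕ) :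
    1 ≤ Ctwo n m lam i := by
  have hε := eps_pos hn hΔ (one_pos.trans_le hΛ)
  rw [Ctwo, one_le_div (by positivity)]
  calc Del m lam ^ n * eps n m lam ^ ((n + 1) ^ (m - i - 1)) ≤ 1 :=
        mul_le_one₀ (pow_le_one₀ hΔ.le Del_le_one) (by positivity)
          (pow_le_one₀ hε.le (eps_le_one hn hΔ.le hΛ))
    _ ≤ 2 ^ (2 * (n + 1) ^ 2) * Lamb m lam ^ (n + 1) :=
        one_le_mul_of_one_le_of_one_le (one_le_pow₀ one_le_two) (one_le_pow₀ hΛ)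

theorem one_add_div_pow_mul_pow_succ_le {A e ε : ℝ} (he : 0 < e) (heε : e ≤ ε) (heA : e ≤ A) :
    (1 + A / e) ^ n * e ^ (n + 1) ≤ (2 * A) ^ n * ε := by
  have hA : 0 ≤ A := he.le.trans heA
  calc (1 + A / e) ^ n * e ^ (n + 1) = (e + A) ^ n * e := by
        rw [pow_succ, ← mul_assoc, ← mul_pow, one_add_mul, div_mul_cancel₀ _ he.ne']
    _ ≤ (2 * A) ^ n * ε := by gcongr; linarith

theorem two_mul_pow_mul_eps_le (hn : 0 < n) (hΔ : 0 < Del m lam) (hΛ : 1 ≤ Lamb m lam) :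
    (2 * (2 ^ (2 * (n + 1) ^ 2) * Lamb m lam ^ (n + 1) / Del m lam ^ n)) ^ n * eps n m lam ≤
      Del m lam ^ 2 / (n * Lamb m lam) := by
  have htwo : (2 * 2 ^ (2 * (n + 1) ^ 2)) ^ n ≤ (2 : ℝ) ^ (3 * (n + 1) ^ 3) := by
    rw [← pow_succ', ← pow_mul]
    exact pow_le_pow_right₀ one_le_two (by nlinarith [sq_nonneg n])
  calc _ = (2 * 2 ^ (2 * (n + 1) ^ 2)) ^ n / 2 ^ (3 * (n + 1) ^ 3) *
        (Del m lam ^ (n + 1) / (n * Lamb m lam ^ (n + 1))) := by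
        have hΔexp : Del m lam ^ (n ^ 2 + n + 1) =
            (Del m lam ^ n) ^ n * Del m lam ^ (n + 1) := by ring
        have hΛexp : Lamb m lam ^ ((n + 1) ^ 2) =
            (Lamb m lam ^ (n + 1)) ^ n * Lamb m lam ^ (n + 1) := by ring
        have hΛ0 : 0 < Lamb m lam := by linarith
        rw [eps, hΔexp, hΛexp, ← mul_div_assoc 2, ← mul_assoc 2, div_pow,
          mul_pow _ (Lamb m lam ^ _)]
        field_simp
    _ ≤ 1 * (Del m lam ^ 2 / (n * Lamb m lam)) := by
        have hΔn : Del m lam ^ (n + 1) ≤ Del m lam ^ 2 :=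
          pow_le_pow_of_le_one hΔ.le Del_le_one (by lia)
        have hΛn : Lamb m lam ≤ Lamb m lam ^ (n + 1) := le_self_pow₀ hΛ (by lia)
        gcongr
        exact div_le_one_of_le₀ htwo (by positivity)
    _ = _ := one_mul _

theorem one_add_Ctwo_pow_mul_rho_le (hn : 0 < n) (hΔ : 0 < Del m lam) (hΛ : 1 ≤ Lamb m lam)
    {i : ℕ} (him : i < m) :
    (1 + Ctwo n m lam i) ^ n * rho n m lam i ≤ Del m lam ^ 2 / (n * Lamb m lam) := by
  have hε := eps_pos hn hΔ (one_pos.trans_le hΛ)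
  have hε1 := eps_le_one hn hΔ.le hΛ
  set e := eps n m lam ^ ((n + 1) ^ (m - i - 1)) with he
  have he0 : 0 < e := pow_pos hε _
  have heε : e ≤ eps n m lam := pow_le_of_le_one hε.le hε1 (by positivity)
  have hrho : rho n m lam i = e ^ (n + 1) := by
    rw [rho, he, ← pow_mul, ← pow_succ, Nat.sub_add_cancel (Nat.sub_pos_of_lt him)]
  have hA : 1 ≤ 2 ^ (2 * (n + 1) ^ 2) * Lamb m lam ^ (n + 1) / Del m lam ^ n := by
    rw [one_le_div (by positivity)]
    exact (pow_le_one₀ hΔ.le Del_le_one).trans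
      (one_le_mul_of_one_le_of_one_le (one_le_pow₀ one_le_two) (one_le_pow₀ hΛ))
  rw [Ctwo, ← he, ← div_div, hrho]
  exact (one_add_div_pow_mul_pow_succ_le he0 heε ((heε.trans hε1).trans hA)).trans
    (two_mul_pow_mul_eps_le hn hΔ hΛ)

theorem Del_sq_div_le (hn : 0 < n) (hΔ : 0 ≤ Del m lam) (hΛ : 1 ≤ Lamb m lam) :
    Del m lam ^ 2 / (n * Lamb m lam) ≤ Del m lam := by
  have hn' : (1 : ℝ) ≤ n := by exact_mod_cast hn
  calc Del m lam ^ 2 / (n * Lamb m lam) ≤ Del m lam ^ 2 :=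
        div_le_self (sq_nonneg _) (one_le_mul_of_one_le_of_one_le hn' hΛ)
    _ ≤ Del m lam := by rw [sq]; exact mul_le_of_le_one_left hΔ Del_le_one

theorem mul_sum_le_of_forall_le_div {ι : Type*} {s : Finset ι} {x : ι → ℝ} {y Λ : ℝ} (hn : 0 < n)
    (hsn : s.card ≤ n) (hΛ : 0 < Λ) (hy : 0 ≤ y) (hx : ∀ i ∈ s, x i ≤ y / (n * Λ)) :
    Λ * ∑ i ∈ s, x i ≤ y := by
  calc Λ * ∑ i ∈ s, x i ≤ Λ * (s.card * (y / (n * Λ))) := by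
        rw [← nsmul_eq_mul]
        gcongr
        exact s.sum_le_card_nsmul _ _ hx
    _ = s.card / n * y := by field_simp
    _ ≤ y := mul_le_of_le_one_left hy (div_le_one_of_le₀ (by exact_mod_cast hsn) n.cast_nonneg)

theorem separated_of_root_bounds {q : ℕ} {α β : ℕ → ℝ} (hn : 0 < n) (hqm : q < m) (hmn : m ≤ n)
    (hΔ : 0 < Del m lam) (hΛ : 1 ≤ Lamb m lam)
    (hα : ∀ i, 1 ≤ i → i ≤ q + 1 → lam i ≤ α i)
    (hαβ : ∀ i ∈ Finset.Icc 1 q, α i + Cone n m lam ^ n * rho n m lam i < β i)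
    (hβ : ∀ i ∈ Finset.Icc 1 q, β i < lam i + (1 + Ctwo n m lam i) ^ n * rho n m lam i) :
    (∀ i ∈ Finset.Icc 1 q, α i < β i) ∧
      (∀ i ∈ Finset.Icc 1 q, β i + Del m lam ≤ α (i + 1)) ∧
      Lamb m lam * ∑ i ∈ Finset.Icc 1 q, (β i - α i) ≤ Del m lam ^ 2 := by
  have hΛ0 := one_pos.trans_le hΛ
  have hβ' (i) (hi : i ∈ Finset.Icc 1 q) : β i - lam i ≤ Del m lam ^ 2 / (n * Lamb m lam) := by
    have him : i < m := (Finset.mem_Icc.1 hi).2.trans_lt hqm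
    linarith [hβ i hi, one_add_Ctwo_pow_mul_rho_le hn hΔ hΛ him]
  refine ⟨fun i hi => ?_, fun i hi => ?_, ?_⟩
  · have hC := mul_pos (pow_pos (Cone_pos (n := n) hΔ hΛ0) n) (rho_pos hn hΔ hΛ0 i)
    linarith [hαβ i hi]
  · obtain ⟨h1, hiq⟩ := Finset.mem_Icc.1 hi
    linarith [hβ' i hi, Del_sq_div_le hn hΔ.le hΛ, hα (i + 1) (by lia) (by lia),
      add_two_mul_Del_le (lam := lam) h1 (hiq.trans_lt hqm)]
  · have hcard : (Finset.Icc 1 q).card ≤ n := by rw [Nat.card_Icc]; lia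
    refine mul_sum_le_of_forall_le_div hn hcard hΛ0 (sq_nonneg _) fun i hi => ?_
    obtain ⟨h1, hiq⟩ := Finset.mem_Icc.1 hi
    linarith [hβ' i hi, hα i h1 (by lia)]

end Constants

/-- Lemma `cas2`(i). -/
theorem stmt_16 (n m : ℕ) (hm : 2 ≤ m) (hmn : m ≤ n) (lam : ℕ → ℝ)
    (hpos : 0 < lam 1) (hmono : ∀ i, 1 ≤ i → i < m → lam i < lam (i + 1))
    (p : ℕ) (hp2 : 2 ≤ p) (hpm : p ≤ m)
    (lamstar : ℝ) (hls : lam p < lamstar ∧ lamstar < Lamb m lam)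
    (μ ν : ℝ) (hν : ν ≠ 0) (hμν : μ / ν < 0)
    (α β : ℕ → ℝ)
    (hαp : lam p ≤ α p ∧ α p < lamstar)
    (hroots : ∀ i, 1 ≤ i → i ≤ p - 1 →
      lam i ≤ α i ∧
      α i + Cone n m lam ^ n * rho n m lam i < β i ∧
      β i < lam i + (1 + Ctwo n m lam i) ^ n * rho n m lam i ∧
      lam i + (1 + Ctwo n m lam i) ^ n * rho n m lam i < lam (i + 1)) :
    ∃ (α' β' : ℕ → ℝ) (mstar bstar μ₀ ν₀ : ℝ),
      (∀ i, 1 ≤ i → i < p → α' i < α' (i + 1)) ∧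
      (∀ i, 1 ≤ i → i < p - 1 → β' i < β' (i + 1)) ∧
      α' p = lamstar ∧
      (∀ i, 1 ≤ i → i ≤ p - 1 →
        α i < α' i ∧ α' i < β i ∧
        Cone n m lam * (β i - α i) ≤ β' i - α' i ∧
        β' i - α' i ≤ Ctwo n m lam i * (β i - α i)) ∧
      0 < mstar ∧ 0 < bstar ∧
      -μ₀ / ν₀ > -(lam 1 / Lamb m lam) * (μ / ν) ∧
      Polynomial.C μ * ∏ i ∈ Finset.Icc 1 p, (Polynomial.X - Polynomial.C (α i)) =
        -(Polynomial.C mstar * Polynomial.C ν) * Polynomial.X *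
            ∏ i ∈ Finset.Icc 1 (p - 1), (Polynomial.X - Polynomial.C (β i)) -
          Polynomial.C bstar * Polynomial.C μ₀ *
            ∏ i ∈ Finset.Icc 1 p, (Polynomial.X - Polynomial.C (α' i)) ∧
      Polynomial.C ν * (Polynomial.X - Polynomial.C lamstar) *
          ∏ i ∈ Finset.Icc 1 (p - 1), (Polynomial.X - Polynomial.C (β i)) =
        Polynomial.C μ₀ * ∏ i ∈ Finset.Icc 1 p, (Polynomial.X - Polynomial.C (α' i)) +
          Polynomial.C bstar * Polynomial.C ν₀ * (Polynomial.C lamstar - Polynomial.X) *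
            ∏ i ∈ Finset.Icc 1 (p - 1), (Polynomial.X - Polynomial.C (β' i)) := by
  obtain ⟨q, rfl⟩ : ∃ q, p = q + 1 := ⟨p - 1, by lia⟩
  simp only [Nat.add_sub_cancel, ← and_imp, ← Finset.mem_Icc] at hroots ⊢
  have hn : 0 < n := by lia
  have hΔ := Del_pos hm hmono
  have hΛ : 1 ≤ Lamb m lam := by rw [Lamb]; linarith [first_le hmono (by lia) le_rfl]
  have hΛ0 := one_pos.trans_le hΛ
  have hα (i) (h1 : 1 ≤ i) (hi : i ≤ q + 1) : lam i ≤ α i := by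
    rcases hi.lt_or_eq with hiq | rfl
    · exact (hroots i (Finset.mem_Icc.2 ⟨h1, Nat.le_of_lt_succ hiq⟩)).1
    · exact hαp.1
  obtain ⟨hαβ, hβα, hsum⟩ := separated_of_root_bounds hn hpm hmn hΔ hΛ hα
    (fun i hi => (hroots i hi).2.1) fun i hi => (hroots i hi).2.2.1
  obtain ⟨α', β', mstar, bstar, μ₀, ν₀, hα', hβ', hlast, hbounds, hidentities⟩ :=
    exists_decomposition_of_separated_roots (by lia) hΔ hpos (hα 1 le_rfl (by lia)) hαβ hβα hsum
      hαp.2 hls.2 hμν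
  refine ⟨α', β', mstar, bstar, μ₀, ν₀, by simpa using hα', by simpa using hβ', hlast,
    fun i hi => ?_, hidentities⟩
  obtain ⟨⟨hαα', hα'β⟩, hlower, hupper⟩ := hbounds i hi
  have hlen : 0 ≤ β i - α i := (sub_pos.2 (hαβ i hi)).le
  refine ⟨hαα', hα'β, le_trans ?_ hlower, hupper.trans ?_⟩
  · exact mul_le_mul_of_nonneg_right (Cone_le hΔ.le hΛ0 (by lia)) hlen
  · exact le_mul_of_one_le_left hlen (one_le_Ctwo hn hΔ hΛ i)
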